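/- arXiv:1201.1022 — 2 statements merged into one kernel-verified Lean document; each statement's English description precedes it below -/
import Mathlib

section
/- Let v : ℝⁿ ∖ {0} → ℝ (n ≥ 2) be real analytic and positively homogeneous of order 1, let l ⊂ ℝⁿ be an affine line not passing through the origin, and suppose the restriction of v to l is an affine function. Let p ⊆ ℝⁿ be the 2-dimensional linear subspace spanned by l. Then the restriction of v to p ∖ {0} is linear, i.e. agrees with the restriction of a linear functional on ℝⁿ. -/
/-!
Homogeneity turns the affine formula on the line `l = {x₀ + t • d}` into agreement with a linear map
on the open half-plane swept out by the rays through `l`. The punctured plane is connected because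
the plane has dimension two, so the identity theorem for analytic functions carries the agreement
over to all of it.
-/

open Set Filter Topology

theorem linearIndependent_pair_iff_forall_add_smul_ne_zero {K V : Type*} [DivisionRing K]
    [AddCommGroup V] [Module K V] {x y : V} (hy : y ≠ 0) :
    LinearIndependent K ![x, y] ↔ ∀ t : K, x + t • y ≠ 0 := by
  rw [LinearIndependent.pair_symm_iff, LinearIndependent.pair_iff' hy,
    (Equiv.neg K).forall_congr_left]
  simp only [Equiv.neg_symm, Equiv.neg_apply, neg_smul, ne_eq, neg_eq_iff_add_eq_zero, add_comm]

theorem exists_continuousLinearMap_of_linearIndependent {K V W ι : Type*} [Field K]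
    [TopologicalSpace K] [IsTopologicalRing K] [AddCommGroup V] [TopologicalSpace V] [Module K V]
    [SeparatingDual K V] [AddCommGroup W] [TopologicalSpace W] [IsTopologicalAddGroup W]
    [Module K W] [ContinuousSMul K W] [Finite ι] {w : ι → V} (hw : LinearIndependent K w)
    (c : ι → W) : ∃ f : V →L[K] W, ∀ i, f (w i) = c i := by
  classical
  have := Fintype.ofFinite ι
  have h_dual : ∀ i, ∃ φ : V →L[K] K, ∀ j, φ (w j) = if j = i then 1 else 0 := fun i ↦ by
    obtain ⟨φ, hφ⟩ := SeparatingDual.dualMap_surjective_iff.2 hw (Finsupp.lapply i)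
    refine ⟨φ, fun j ↦ ?_⟩
    simpa [Finsupp.single_apply] using LinearMap.congr_fun hφ (Finsupp.single j 1)
  choose φ hφ using h_dual
  exact ⟨∑ i, (φ i).smulRight (c i), fun j ↦ by simp [hφ]⟩

theorem one_lt_rank_span_pair {R M : Type*} [Ring R] [StrongRankCondition R] [AddCommGroup M]
    [Module R M] {x y : M} (h : LinearIndependent R ![x, y]) :
    1 < Module.rank R (Submodule.span R {x, y}) := by
  have := nontrivial_of_invariantBasisNumber R
  apply Module.lt_rank_of_lt_finrank
  rw [← Matrix.range_cons_cons_empty x y ![], finrank_span_eq_card h, Fintype.card_fin]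
  exact one_lt_two

theorem eventuallyEq_nhdsWithin_span_pair_of_forall_pos {K V W : Type*} [Field K] [LinearOrder K]
    [TopologicalSpace K] [ClosedIicTopology K] [IsTopologicalRing K] [IsStrictOrderedRing K]
    [AddCommGroup V] [TopologicalSpace V] [Module K V] [SeparatingDual K V]
    {x y : V} (h : LinearIndependent K ![x, y]) {f g : V → W}
    (hfg : ∀ a b : K, 0 < a → f (a • x + b • y) = g (a • x + b • y)) :
    f =ᶠ[𝓝[Submodule.span K {x, y}] x] g := by
  obtain ⟨φ, hφ⟩ := exists_continuousLinearMap_of_linearIndependent h ![(1 : K), 0]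
  simp only [Fin.forall_fin_two, Matrix.cons_val_zero, Matrix.cons_val_one] at hφ
  have h_pos : ∀ᶠ z in 𝓝 x, 0 < φ z :=
    φ.continuous.continuousAt.eventually_const_lt (by simp [hφ.1])
  filter_upwards [nhdsWithin_le_nhds h_pos, self_mem_nhdsWithin] with z hz hzp
  obtain ⟨a, b, rfl⟩ := Submodule.mem_span_pair.1 hzp
  exact hfg a b (by simpa [hφ] using hz)

theorem map_smul_add_smul_of_affine_on_line {K V W : Type*} [DivisionRing K] [Preorder K]
    [AddCommGroup V] [Module K V] [AddCommGroup W] [Module K W] {v : V → W}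
    (h_hom : ∀ t : K, 0 < t → ∀ x, x ≠ 0 → v (t • x) = t • v x) {x d : V} {α β : W}
    (h_line : ∀ t : K, x + t • d ≠ 0) (h_aff : ∀ t : K, v (x + t • d) = t • α + β)
    {a : K} (ha : 0 < a) (b : K) : v (a • x + b • d) = a • β + b • α := by
  calc v (a • x + b • d) = v (a • (x + (a⁻¹ * b) • d)) := by
        rw [smul_add, smul_smul, mul_inv_cancel_left₀ ha.ne']
    _ = a • ((a⁻¹ * b) • α + β) := by rw [h_hom a ha _ (h_line _), h_aff]
    _ = a • β + b • α := by
        rw [smul_add, smul_smul, mul_inv_cancel_left₀ ha.ne', add_comm]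

section NormedSpace

variable {E F : Type*} [NormedAddCommGroup E] [NormedSpace ℝ E] [NormedAddCommGroup F]
  [NormedSpace ℝ F]

theorem eqOn_submodule_diff_zero_of_eventuallyEq {f g : E → F} {p : Submodule ℝ E}
    (hp : 1 < Module.rank ℝ p) (hf : AnalyticOnNhd ℝ f (p \ {0}))
    (hg : AnalyticOnNhd ℝ g (p \ {0})) {z : E} (hzp : z ∈ p) (hz : z ≠ 0)
    (hfg : f =ᶠ[𝓝[p] z] g) : EqOn f g (p \ {0}) := by
  have h_maps : MapsTo p.subtypeL {0}ᶜ (p \ {0}) := fun x hx ↦ ⟨x.2, by simpa using hx⟩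
  have h_restrict : EqOn (f ∘ p.subtypeL) (g ∘ p.subtypeL) {0}ᶜ :=
    (hf.comp (p.subtypeL.analyticOnNhd _) h_maps).eqOn_of_preconnected_of_eventuallyEq
      (hg.comp (p.subtypeL.analyticOnNhd _) h_maps)
      (isConnected_compl_singleton_of_one_lt_rank hp 0).isPreconnected
      (z₀ := ⟨z, hzp⟩) (by simpa using hz)
      ((eventually_nhds_subtype_iff (p : Set E) ⟨z, hzp⟩ fun x ↦ f x = g x).2 hfg)
  exact fun x ⟨hxp, hx⟩ ↦ @h_restrict ⟨x, hxp⟩ (by simpa using hx)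

theorem homogeneous_affine_on_line_is_linear_on_plane_general {v : E → F}
    (h_an : AnalyticOnNhd ℝ v {x | x ≠ 0})
    (h_hom : ∀ t : ℝ, 0 < t → ∀ x : E, x ≠ 0 → v (t • x) = t • v x)
    {x₀ d : E} (hd : d ≠ 0) (h_line : ∀ t : ℝ, x₀ + t • d ≠ 0)
    (h_aff : ∃ α β : F, ∀ t : ℝ, v (x₀ + t • d) = t • α + β) :
    ∃ ℓ : E →L[ℝ] F, ∀ x ∈ Submodule.span ℝ {x₀, d}, x ≠ 0 → v x = ℓ x := by
  obtain ⟨α, β, h_aff⟩ := h_aff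
  have h_indep : LinearIndependent ℝ ![x₀, d] :=
    (linearIndependent_pair_iff_forall_add_smul_ne_zero hd).2 h_line
  obtain ⟨ℓ, hℓ⟩ := exists_continuousLinearMap_of_linearIndependent h_indep ![β, α]
  simp only [Fin.forall_fin_two, Matrix.cons_val_zero, Matrix.cons_val_one] at hℓ
  have h_half_plane : v =ᶠ[𝓝[Submodule.span ℝ {x₀, d}] x₀] ℓ :=
    eventuallyEq_nhdsWithin_span_pair_of_forall_pos h_indep fun a b ha ↦ by
      rw [map_smul_add_smul_of_affine_on_line h_hom h_line h_aff ha, map_add, map_smul, map_smul,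
        hℓ.1, hℓ.2]
  have h_plane : EqOn v ℓ (Submodule.span ℝ {x₀, d} \ {0}) :=
    eqOn_submodule_diff_zero_of_eventuallyEq (one_lt_rank_span_pair h_indep)
      (h_an.mono fun _ hx ↦ hx.2) (ℓ.analyticOnNhd _)
      (Submodule.mem_span_of_mem (mem_insert x₀ {d})) (h_indep.ne_zero 0) h_half_plane
  exact ⟨ℓ, fun x hxp hx ↦ h_plane ⟨hxp, hx⟩⟩

end NormedSpace

/-- Let `v` be real analytic and positively 1-homogeneous on `ℝⁿ ∖ {0}` (`n ≥ 2`), let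
`l = {x₀ + t•d : t ∈ ℝ}` be an affine line not passing through the origin, and suppose
the restriction of `v` to `l` is affine. Then `v` is linear on `p ∖ {0}`, where
`p = span{x₀, d}` is the 2-dimensional subspace spanned by `l`. -/
theorem homogeneous_affine_on_line_is_linear_on_plane
    (n : ℕ) (hn : 2 ≤ n)
    (v : EuclideanSpace ℝ (Fin n) → ℝ)
    (h_an : AnalyticOnNhd ℝ v {x | x ≠ 0})
    (h_hom : ∀ t : ℝ, 0 < t → ∀ x : EuclideanSpace ℝ (Fin n), x ≠ 0 →
      v (t • x) = t * v x)
    (x₀ d : EuclideanSpace ℝ (Fin n)) (hd : d ≠ 0)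
    (h_line : ∀ t : ℝ, x₀ + t • d ≠ 0)
    (h_aff : ∃ α β : ℝ, ∀ t : ℝ, v (x₀ + t • d) = α * t + β) :
    ∃ ℓ : EuclideanSpace ℝ (Fin n) →ₗ[ℝ] ℝ,
      ∀ x ∈ Submodule.span ℝ {x₀, d}, x ≠ 0 → v x = ℓ x := by
  obtain ⟨ℓ, hℓ⟩ := homogeneous_affine_on_line_is_linear_on_plane_general h_an h_hom hd h_line
    (by simpa only [smul_eq_mul, mul_comm] using h_aff)
  exact ⟨ℓ, hℓ⟩
end

section
/- Let v : ℝ³ ∖ {0} → ℝ be real analytic and positively homogeneous of order 1, let p ⊂ ℝ³ be a 2-dimensional linear subspace with v ≡ 0 on p ∖ {0}, and suppose v satisfies a linear uniformly elliptic equation Σ_{i,j} a_{ij}(x) ∂²v/∂x_i∂x_j = 0 on ℝ³ ∖ p, where the coefficients a_{ij} are continuous on ℝ³ ∖ p and there is C ≥ 1 with (1/C)|ξ|² ≤ Σ a_{ij}(x)ξ_iξ_j ≤ C|ξ|² for all x ∈ ℝ³ ∖ p and ξ ∈ ℝ³. Then ∂_e v ≡ 0 for every vector e ∈ p, and consequently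 v is a linear function. -/
/-!
Fix `e ∈ p` and restrict `∂ₑv` to an affine plane `n + p` with `n ∉ p`. Since `Dv` is homogeneous
of order `0`, the Hessian of `v` at `x` annihilates `x`, so it is determined by its restriction to
`p`; by ellipticity it is zero or indefinite, hence its determinant on `p` is negative unless the
Hessian vanishes. With `w` a second direction in `p`, this determinant is, on `n + p`, the Jacobian
of the map `(∂ₑv, ∂_w v)`. The Jacobian of a `C¹` map whose first component has compact support
integrates to zero, which gives a maximum principle for `∂ₑv` on `n + p`. At infinity in `n + p`
the function `∂ₑv` tends to its values on `p`, which are zero, so `∂ₑv ≤ 0`; replacing `e` by `-e`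
gives `∂ₑv = 0`. Then `v` is invariant under translation by any `q ∈ p`, and its derivative at
`q ≠ 0` is the linear function `v`.
-/

open Filter MeasureTheory Metric Module Set
open scoped Topology

section Jacobian

variable {E : Type*} [NormedAddCommGroup E] [NormedSpace ℝ E]

lemma exists_contDiff_hasCompactSupport_eventuallyEq [FiniteDimensional ℝ E] {g : E → ℝ} {n : ℕ∞}
    (hg : ContDiff ℝ n g) {K : Set E} (hK : IsCompact K) :
    ∃ g₀ : E → ℝ, ContDiff ℝ n g₀ ∧ HasCompactSupport g₀ ∧ ∀ z ∈ K, g₀ =ᶠ[𝓝 z] g := by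
  obtain ⟨R, hR, hKR⟩ := hK.isBounded.subset_ball_lt 0 0
  let χ : ContDiffBump (0 : E) := ⟨R, R + 1, hR, lt_add_one R⟩
  refine ⟨fun z => χ z * g z, χ.contDiff.mul hg, χ.hasCompactSupport.mul_right, fun z hz => ?_⟩
  filter_upwards [χ.eventuallyEq_one_of_mem_ball (hKR hz)] with y hy
  simp [hy]

variable [MeasurableSpace E] [BorelSpace E] {μ : Measure E} {f g : E → ℝ}

lemma hasDerivAt_integral_mul_comp_add_smul (hf : Integrable f μ) (hg : ContDiff ℝ 1 g)
    (hgc : HasCompactSupport g) (u : E) :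
    HasDerivAt (fun s : ℝ => ∫ z, f z * g (z + s • u) ∂μ) (∫ z, f z * fderiv ℝ g z u ∂μ) 0 := by
  obtain ⟨C, hC⟩ := hgc.exists_bound_of_continuous hg.continuous
  have hg' : Continuous fun z => fderiv ℝ g z u :=
    (hg.continuous_fderiv one_ne_zero).clm_apply continuous_const
  obtain ⟨C', hC'⟩ := (hgc.fderiv_apply ℝ u).exists_bound_of_continuous hg'
  have hderiv (z : E) (s : ℝ) :
      HasDerivAt (fun s : ℝ => f z * g (z + s • u)) (f z * fderiv ℝ g (z + s • u) u) s := by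
    have hline : HasDerivAt (fun s : ℝ => z + s • u) u s := by
      simpa using ((hasDerivAt_id s).smul_const u).const_add z
    exact ((hg.differentiable one_ne_zero _).hasFDerivAt.comp_hasDerivAt s hline).const_mul (f z)
  have hmeas {φ : E → ℝ} (hφ : Continuous φ) (s : ℝ) :
      AEStronglyMeasurable (fun z => φ (z + s • u)) μ :=
    (hφ.comp (continuous_id.add continuous_const)).aestronglyMeasurable
  have hint (s : ℝ) : Integrable (fun z => f z * g (z + s • u)) μ :=
    hf.mul_bdd (hmeas hg.continuous s) (.of_forall fun z => hC _)
  have := (hasDerivAt_integral_of_dominated_loc_of_deriv_le (x₀ := (0 : ℝ))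
    (F' := fun s z => f z * fderiv ℝ g (z + s • u) u) univ_mem
    (.of_forall fun s => (hint s).aestronglyMeasurable) (hint 0)
    (hf.aestronglyMeasurable.mul (hmeas hg' 0))
    (.of_forall fun z s _ => (norm_mul_le _ _).trans
      (mul_le_mul_of_nonneg_left (hC' _) (norm_nonneg (f z))))
    (hf.norm.mul_const C') (.of_forall fun z s _ => hderiv z s)).2
  simpa using this

variable [FiniteDimensional ℝ E] [μ.IsAddHaarMeasure]

lemma integral_fderiv_mul_comp_add (hf : ContDiff ℝ 1 f) (hfc : HasCompactSupport f)
    (hg : ContDiff ℝ 1 g) (w a : E) :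
    ∫ z, fderiv ℝ g z w * f (z + a) ∂μ = -∫ z, fderiv ℝ f z w * g (z - a) ∂μ := by
  set ga : E → ℝ := fun z => g (z - a)
  have hga : ContDiff ℝ 1 ga := hg.comp (by fun_prop)
  have hga' (z : E) : fderiv ℝ ga z = fderiv ℝ g (z - a) := by
    simp only [ga, sub_eq_add_neg, fderiv_comp_add_right]
  have hf'_cont : Continuous fun z => fderiv ℝ f z w :=
    (hf.continuous_fderiv one_ne_zero).clm_apply continuous_const
  have hga'_cont : Continuous fun z => fderiv ℝ ga z w :=
    (hga.continuous_fderiv one_ne_zero).clm_apply continuous_const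
  calc ∫ z, fderiv ℝ g z w * f (z + a) ∂μ
    _ = ∫ z, f (z + a) * fderiv ℝ ga (z + a) w ∂μ := by simp [hga', mul_comm]
    _ = ∫ z, f z * fderiv ℝ ga z w ∂μ :=
      integral_add_right_eq_self (fun z => f z * fderiv ℝ ga z w) a
    _ = -∫ z, fderiv ℝ f z w * ga z ∂μ :=
      integral_mul_fderiv_eq_neg_fderiv_mul_of_integrable
        ((hf'_cont.mul hga.continuous).integrable_of_hasCompactSupport
          (hfc.fderiv_apply ℝ w).mul_right)
        ((hf.continuous.mul hga'_cont).integrable_of_hasCompactSupport hfc.mul_right)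
        ((hf.continuous.mul hga.continuous).integrable_of_hasCompactSupport hfc.mul_right)
        (fun z _ => hf.differentiable one_ne_zero z) (fun z _ => hga.differentiable one_ne_zero z)

lemma integral_fderiv_mul_fderiv_comm_of_hasCompactSupport (hf : ContDiff ℝ 1 f)
    (hfc : HasCompactSupport f) (hg : ContDiff ℝ 1 g) (hgc : HasCompactSupport g) (u w : E) :
    ∫ z, fderiv ℝ f z u * fderiv ℝ g z w ∂μ = ∫ z, fderiv ℝ f z w * fderiv ℝ g z u ∂μ := by
  -- Integrating by parts twice would need second derivatives. Instead, both sides arise as the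
  -- derivative at `s = 0` of `s ↦ ∫ ∂_w g (z) * f (z + s • u)`, so `C¹` functions suffice.
  have hint {φ : E → ℝ} (hφ : ContDiff ℝ 1 φ) (hφc : HasCompactSupport φ) :
      Integrable (fun z => fderiv ℝ φ z w) μ :=
    ((hφ.continuous_fderiv one_ne_zero).clm_apply continuous_const).integrable_of_hasCompactSupport
      (hφc.fderiv_apply ℝ w)
  have hleft := hasDerivAt_integral_mul_comp_add_smul (hint hg hgc) hf hfc u
  have hright := (hasDerivAt_integral_mul_comp_add_smul (hint hf hfc) hg hgc (-u)).neg
  simp only [integral_fderiv_mul_comp_add hf hfc hg, sub_eq_add_neg, ← smul_neg] at hleft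
  simpa [integral_neg, mul_comm] using hleft.unique hright

lemma integral_fderiv_mul_fderiv_comm (hf : ContDiff ℝ 1 f) (hfc : HasCompactSupport f)
    (hg : ContDiff ℝ 1 g) (u w : E) :
    ∫ z, fderiv ℝ f z u * fderiv ℝ g z w ∂μ = ∫ z, fderiv ℝ f z w * fderiv ℝ g z u ∂μ := by
  obtain ⟨g₀, hg₀, hg₀c, hg₀g⟩ :=
    exists_contDiff_hasCompactSupport_eventuallyEq (n := 1) hg hfc.isCompact
  have hcongr (y y' : E) : ∫ z, fderiv ℝ f z y * fderiv ℝ g z y' ∂μ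
      = ∫ z, fderiv ℝ f z y * fderiv ℝ g₀ z y' ∂μ := by
    refine integral_congr_ae (.of_forall fun z => ?_)
    by_cases hz : z ∈ tsupport f
    · simp only [(hg₀g z hz).fderiv_eq]
    · simp [fderiv_of_notMem_tsupport ℝ hz]
  rw [hcongr, hcongr, integral_fderiv_mul_fderiv_comm_of_hasCompactSupport hf hfc hg₀ hg₀c]

end Jacobian

section MaximumPrinciple

variable {E : Type*} [NormedAddCommGroup E] [NormedSpace ℝ E] [FiniteDimensional ℝ E]
  [Nontrivial E] {f g : E → ℝ} {u w : E}

lemma eq_zero_of_hasCompactSupport_of_jacobian_nonneg_imp_fderiv_eq_zero (hf : ContDiff ℝ 1 f)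
    (hfc : HasCompactSupport f) (hg : ContDiff ℝ 1 g)
    (hJ : ∀ z, 0 ≤ fderiv ℝ f z u * fderiv ℝ g z w - fderiv ℝ f z w * fderiv ℝ g z u →
      fderiv ℝ f z = 0) :
    f = 0 := by
  borelize E
  let μ : Measure E := Measure.addHaar
  set J : E → ℝ := fun z => fderiv ℝ f z w * fderiv ℝ g z u - fderiv ℝ f z u * fderiv ℝ g z w
  have hcont {φ : E → ℝ} (hφ : ContDiff ℝ 1 φ) (y : E) : Continuous fun z => fderiv ℝ φ z y :=
    (hφ.continuous_fderiv one_ne_zero).clm_apply continuous_const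
  have hprod_cont (y y' : E) : Continuous fun z => fderiv ℝ f z y * fderiv ℝ g z y' :=
    (hcont hf y).mul (hcont hg y')
  have hprod_supp (y y' : E) : HasCompactSupport fun z => fderiv ℝ f z y * fderiv ℝ g z y' :=
    (hfc.fderiv_apply ℝ y).mul_right
  have hJ_cont : Continuous J := (hprod_cont w u).sub (hprod_cont u w)
  have hJ_supp : HasCompactSupport J := (hprod_supp w u).sub (hprod_supp u w)
  have hJ_integral : ∫ z, J z ∂μ = 0 := by
    rw [integral_sub ((hprod_cont w u).integrable_of_hasCompactSupport (hprod_supp w u))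
      ((hprod_cont u w).integrable_of_hasCompactSupport (hprod_supp u w)),
      integral_fderiv_mul_fderiv_comm hf hfc hg, sub_self]
  have hJ_nonneg : 0 ≤ J := fun z => by
    by_contra! hz
    have hz' := hJ z (by simp only [J, Pi.zero_apply] at hz; linarith)
    simp [J, hz'] at hz
  have hJ_zero (z : E) : J z = 0 := by
    by_contra hz
    exact (hJ_cont.integral_pos_of_hasCompactSupport_nonneg_nonzero (μ := μ)
      hJ_supp hJ_nonneg hz).ne' hJ_integral
  have hf_const := is_const_of_fderiv_eq_zero (hf.differentiable one_ne_zero)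
    fun z => hJ z (by have := hJ_zero z; simp only [J] at this; linarith)
  obtain ⟨z₀, hz₀⟩ := (coclosedCompact_eq_cocompact (X := E) ▸
    hasCompactSupport_iff_eventuallyEq.1 hfc).exists
  exact funext fun z => (hf_const z z₀).trans hz₀

lemma nonpos_of_jacobian_nonneg_imp_fderiv_eq_zero (hf : ContDiff ℝ 1 f) (hg : ContDiff ℝ 1 g)
    (hJ : ∀ z, 0 ≤ fderiv ℝ f z u * fderiv ℝ g z w - fderiv ℝ f z w * fderiv ℝ g z u →
      fderiv ℝ f z = 0)
    (hlim : ∀ ε > 0, ∀ᶠ z in cocompact E, f z ≤ ε) (z : E) : f z ≤ 0 := by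
  refine le_of_forall_pos_le_add fun ε hε => ?_
  -- Truncating `f` smoothly at height `ε` preserves `hJ` and produces compact support.
  have hφ : ContDiff ℝ 1 expNegInvGlue := expNegInvGlue.contDiff (n := 1)
  set F : E → ℝ := fun z => expNegInvGlue (f z - ε)
  have hF : ContDiff ℝ 1 F := hφ.comp (hf.sub contDiff_const)
  have hFc : HasCompactSupport F := by
    rw [hasCompactSupport_iff_eventuallyEq, coclosedCompact_eq_cocompact]
    filter_upwards [hlim ε hε] with z hz
    exact expNegInvGlue.zero_of_nonpos (sub_nonpos.2 hz)
  have hF' (z : E) : fderiv ℝ F z = deriv expNegInvGlue (f z - ε) • fderiv ℝ f z :=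
    ((hφ.differentiable one_ne_zero _).hasDerivAt.comp_hasFDerivAt z
      ((hf.differentiable one_ne_zero z).hasFDerivAt.sub_const ε)).fderiv
  have hF_zero : F = 0 := by
    refine eq_zero_of_hasCompactSupport_of_jacobian_nonneg_imp_fderiv_eq_zero
      (u := u) (w := w) hF hFc hg fun z hz => ?_
    rcases (expNegInvGlue.monotone.deriv_nonneg (x := f z - ε)).eq_or_lt with h0 | hpos
    · rw [hF', ← h0, zero_smul]
    · rw [hF', hJ z, smul_zero]
      refine nonneg_of_mul_nonneg_right (a := deriv expNegInvGlue (f z - ε)) ?_ hpos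
      simpa only [hF', smul_apply, smul_eq_mul, mul_assoc, mul_sub] using hz
  simpa using expNegInvGlue.zero_iff_nonpos.1 (congrFun hF_zero z)

end MaximumPrinciple

section Homogeneous

variable {E F : Type*} [NormedAddCommGroup E] [NormedSpace ℝ E] [NormedAddCommGroup F]
  [NormedSpace ℝ F] {u : E → F} {k : ℝ}

/-- `u` is positively homogeneous of order `k` on `E ∖ {0}`; the value of `u` at `0` is left
unconstrained. -/
def PosHomogeneous (k : ℝ) (u : E → F) : Prop :=
  ∀ t : ℝ, 0 < t → ∀ x, x ≠ 0 → u (t • x) = t ^ k • u x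

namespace PosHomogeneous

lemma fderiv (hu : PosHomogeneous k u) : PosHomogeneous (k - 1) (fderiv ℝ u) := by
  intro t ht x hx
  have hsmul : (fun y => u (t • y)) =ᶠ[𝓝 x] t ^ k • u := by
    filter_upwards [isOpen_ne.mem_nhds hx] with y hy using hu t ht y hy
  have h := hsmul.fderiv_eq (𝕜 := ℝ)
  rw [fderiv_comp_smul, fderiv_const_smul_field, Pi.smul_apply] at h
  rw [Real.rpow_sub_one ht.ne', div_eq_inv_mul, mul_smul, ← h, inv_smul_smul₀ ht.ne']

lemma fderiv_apply_self (hu : PosHomogeneous k u) {x : E} (hx : x ≠ 0)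
    (hd : DifferentiableAt ℝ u x) : _root_.fderiv ℝ u x x = k • u x := by
  have hline : HasDerivAt (fun t : ℝ => t • x) x 1 := by
    simpa using (hasDerivAt_id (1 : ℝ)).smul_const x
  have hcomp : HasDerivAt (fun t : ℝ => u (t • x)) (_root_.fderiv ℝ u x x) 1 :=
    HasFDerivAt.comp_hasDerivAt (1 : ℝ) (by simpa using hd.hasFDerivAt) hline
  have hpow : HasDerivAt (fun t : ℝ => t ^ k • u x) (k • u x) 1 := by
    simpa using (Real.hasDerivAt_rpow_const (p := k) (.inl one_ne_zero)).smul_const (u x)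
  refine hcomp.unique (hpow.congr_of_eventuallyEq ?_)
  filter_upwards [lt_mem_nhds (zero_lt_one (α := ℝ))] with t ht using hu t ht x hx

lemma tendsto_cocompact_zero {p : Submodule ℝ E} [FiniteDimensional ℝ p] (hu : PosHomogeneous 0 u)
    (hc : ContinuousOn u {0}ᶜ) (hp : ∀ x ∈ p, x ≠ 0 → u x = 0) (n : E) :
    Tendsto (fun z : p => u (n + z)) (cocompact p) (𝓝 0) := by
  have : ProperSpace p := FiniteDimensional.proper ℝ p
  refine Metric.tendsto_nhds.2 fun ε hε => ?_
  -- Rescaling by `‖z‖⁻¹` moves `n + z` towards the unit sphere of `p`, where `u` vanishes.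
  have hnear : ∀ᶠ t : ℝ in 𝓝 0, ∀ ω ∈ sphere (0 : p) 1, dist (u (t • n + ω)) 0 < ε := by
    refine (isCompact_sphere _ _).eventually_forall_of_forall_eventually fun ω hω => ?_
    have hω0 : (ω : E) ≠ 0 := by simpa using ne_of_mem_sphere hω one_ne_zero
    have hcont : ContinuousAt (fun q : ℝ × p => u (q.1 • n + q.2)) (0, ω) :=
      ContinuousAt.comp (g := u) (by simpa using hc.continuousAt (isOpen_ne.mem_nhds hω0))
        (by fun_prop)
    have hlim : Tendsto (fun q : ℝ × p => u (q.1 • n + q.2)) (𝓝 (0, ω)) (𝓝 0) := by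
      simpa [hp ω ω.2 hω0] using hcont.tendsto
    exact hlim.eventually (ball_mem_nhds 0 hε)
  have hinv : Tendsto (fun z : p => ‖z‖⁻¹) (cocompact p) (𝓝 0) :=
    tendsto_inv_atTop_zero.comp tendsto_norm_cocompact_atTop
  have hne : ∀ᶠ z : p in cocompact p, n + z ≠ 0 := by
    filter_upwards [tendsto_norm_cocompact_atTop.eventually_gt_atTop ‖n‖] with z hz h
    rw [eq_neg_of_add_eq_zero_left h, norm_neg] at hz
    exact lt_irrefl _ hz
  filter_upwards [hinv.eventually hnear, hne,
    tendsto_norm_cocompact_atTop.eventually_gt_atTop (0 : ℝ)] with z hz hnz hpos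
  have hunit : ‖z‖⁻¹ • z ∈ sphere (0 : p) 1 := by
    rw [mem_sphere_zero_iff_norm, norm_smul, norm_inv, norm_norm, inv_mul_cancel₀ hpos.ne']
  have hscale := hu ‖z‖⁻¹ (inv_pos.2 hpos) _ hnz
  rw [Real.rpow_zero, one_smul, smul_add] at hscale
  rw [← hscale]
  exact hz _ hunit

lemma fderiv_apply_eq_of_add_smul_eq {x q : E} (hu : PosHomogeneous 1 u)
    (hx : x ≠ 0) (hd : DifferentiableAt ℝ u q) (hq : u q = 0)
    (h : ∀ t : ℝ, 0 < t → u (q + t • x) = u (t • x)) : _root_.fderiv ℝ u q x = u x := by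
  refine tendsto_nhds_unique (hd.hasFDerivAt.hasLineDerivAt x).tendsto_slope_zero_right
    (tendsto_const_nhds.congr' ?_)
  filter_upwards [self_mem_nhdsWithin] with t (ht : 0 < t)
  rw [h t ht, hq, sub_zero, hu t ht x hx, Real.rpow_one, inv_smul_smul₀ ht.ne']

end PosHomogeneous

end Homogeneous

section SaddleForm

variable {E : Type*} [AddCommGroup E] [Module ℝ E] {B : LinearMap.BilinForm ℝ E}

/-- A saddle form is one that is zero or indefinite. It is the coordinate-free form of an elliptic
equation `∑ aᵢⱼ ∂ᵢⱼv = 0` imposed on the Hessian of `v` at one point. -/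
def IsSaddleForm (B : LinearMap.BilinForm ℝ E) : Prop :=
  B.IsPosSemidef ∨ (-B).IsPosSemidef → B = 0

open scoped MatrixOrder in
lemma eq_zero_of_posSemidef_of_sum_mul_eq_zero {ι : Type*} [Fintype ι] {A H : Matrix ι ι ℝ}
    (hA : ∀ ξ : ι → ℝ, ξ ≠ 0 → 0 < ∑ i, ∑ j, A i j * ξ i * ξ j) (hH : H.PosSemidef)
    (h : ∑ i, ∑ j, A i j * H i j = 0) : H = 0 := by
  classical
  -- Writing `H = Sᵀ S` turns the trace pairing into a sum of values of `A` on the rows of `S`.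
  obtain ⟨S, rfl⟩ := CStarAlgebra.nonneg_iff_eq_star_mul_self.mp hH.nonneg
  have hA' (ξ : ι → ℝ) : 0 ≤ ∑ i, ∑ j, A i j * ξ i * ξ j := by
    rcases eq_or_ne ξ 0 with rfl | hξ
    · simp
    · exact (hA ξ hξ).le
  have hsum : ∑ k, ∑ i, ∑ j, A i j * S k i * S k j = 0 := by
    rw [← h, Finset.sum_comm]
    refine Finset.sum_congr rfl fun i _ => ?_
    rw [Finset.sum_comm]
    refine Finset.sum_congr rfl fun j _ => ?_
    simp [Matrix.mul_apply, Finset.mul_sum, mul_assoc]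
  have hS : S = 0 := funext fun k => by
    by_contra hk
    exact (hA _ hk).ne' ((Finset.sum_eq_zero_iff_of_nonneg fun k _ => hA' (S k)).1 hsum k
      (Finset.mem_univ k))
  simp [hS]

lemma isSaddleForm_of_sum_mul_eq_zero {ι : Type*} [Fintype ι] (b : Basis ι ℝ E) {A : Matrix ι ι ℝ}
    (hA : ∀ ξ : ι → ℝ, ξ ≠ 0 → 0 < ∑ i, ∑ j, A i j * ξ i * ξ j)
    (h : ∑ i, ∑ j, A i j * B (b i) (b j) = 0) : IsSaddleForm B := by
  classical
  have hzero {C : LinearMap.BilinForm ℝ E} (hC : C.IsPosSemidef)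
      (h : ∑ i, ∑ j, A i j * C (b i) (b j) = 0) : C = 0 := by
    have hpos : (LinearMap.toMatrix₂ b b C).PosSemidef :=
      (LinearMap.isPosSemidef_iff_posSemidef_toMatrix b).1
        (LinearMap.BilinForm.isPosSemidef_iff.1 hC)
    refine (LinearMap.toMatrix₂ b b).map_eq_zero_iff.1
      (eq_zero_of_posSemidef_of_sum_mul_eq_zero hA hpos ?_)
    simpa [LinearMap.toMatrix₂_apply] using h
  rintro (hB | hB)
  · exact hzero hB h
  · have hneg := hzero hB (by simpa using h)
    exact LinearMap.ext₂ fun x y => by simpa using LinearMap.congr_fun₂ hneg x y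

lemma isSaddleForm_fderiv_fderiv_of_sum_mul_eq_zero {ι : Type*} [Fintype ι] [DecidableEq ι]
    {v : EuclideanSpace ℝ ι → ℝ} {x : EuclideanSpace ℝ ι} {A : Matrix ι ι ℝ} {c : ℝ} (hc : 0 < c)
    (hA : ∀ ξ : EuclideanSpace ℝ ι, c * ‖ξ‖ ^ 2 ≤ ∑ i, ∑ j, A i j * ξ i * ξ j)
    (h : ∑ i, ∑ j, A i j *
      iteratedFDeriv ℝ 2 v x ![EuclideanSpace.single i 1, EuclideanSpace.single j 1] = 0) :
    IsSaddleForm (fderiv ℝ (fderiv ℝ v) x).toBilinForm := by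
  refine isSaddleForm_of_sum_mul_eq_zero (EuclideanSpace.basisFun ι ℝ).toBasis (A := A)
    (fun ξ hξ => ?_) (by simpa [iteratedFDeriv_two_apply] using h)
  have hnorm : 0 < ‖WithLp.toLp 2 ξ‖ := norm_pos_iff.2 (by simpa using hξ)
  exact (by positivity : 0 < c * ‖WithLp.toLp 2 ξ‖ ^ 2).trans_le (hA (WithLp.toLp 2 ξ))

lemma quadratic_semidefinite_of_det_nonneg {a b c : ℝ} (h : 0 ≤ a * c - b * b) :
    (∀ r s : ℝ, 0 ≤ r * r * a + 2 * (r * s * b) + s * s * c) ∨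
      ∀ r s : ℝ, r * r * a + 2 * (r * s * b) + s * s * c ≤ 0 := by
  have hsq (r s : ℝ) : 0 ≤ a * (r * r * a + 2 * (r * s * b) + s * s * c) := by
    nlinarith [sq_nonneg (a * r + b * s), mul_nonneg (sq_nonneg s) h]
  rcases lt_trichotomy a 0 with ha | rfl | ha
  · exact .inr fun r s => nonpos_of_mul_nonneg_right (hsq r s) ha
  · obtain rfl : b = 0 := by nlinarith [sq_nonneg b]
    rcases le_total 0 c with hc | hc
    · exact .inl fun r s => by simpa using mul_nonneg (mul_self_nonneg s) hc
    · exact .inr fun r s => by simpa using mul_nonpos_of_nonneg_of_nonpos (mul_self_nonneg s) hc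
  · exact .inl fun r s => nonneg_of_mul_nonneg_right (hsq r s) ha

lemma IsSaddleForm.eq_zero_of_det_nonneg (hB : IsSaddleForm B) (hsymm : B.IsSymm) {u w x : E}
    (hspan : Submodule.span ℝ {x, u, w} = ⊤) (hx : B x = 0)
    (hdet : 0 ≤ B u u * B w w - B w u * B u w) : B = 0 := by
  have hx' (y : E) : B y x = 0 := by simpa [hx] using hsymm.eq y x
  have hquad (y : E) : ∃ r s : ℝ, B y y = r * r * B u u + 2 * (r * s * B u w) + s * s * B w w := by
    have hy : y ∈ Submodule.span ℝ {x, u, w} := hspan ▸ Submodule.mem_top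
    obtain ⟨t, r, s, rfl⟩ := Submodule.mem_span_triple.1 hy
    refine ⟨r, s, ?_⟩
    simp only [map_add, map_smul, LinearMap.add_apply, LinearMap.smul_apply, hx, hx',
      LinearMap.zero_apply, smul_eq_mul, hsymm.eq u w]
    ring
  rw [hsymm.eq w u] at hdet
  rcases quadratic_semidefinite_of_det_nonneg hdet with hpos | hneg
  · refine hB (.inl ⟨hsymm, ⟨fun y => ?_⟩⟩)
    obtain ⟨r, s, hy⟩ := hquad y
    exact hy ▸ hpos r s
  · refine hB (.inr ⟨hsymm.neg, ⟨fun y => ?_⟩⟩)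
    obtain ⟨r, s, hy⟩ := hquad y
    exact neg_nonneg.2 (hy ▸ hneg r s)

end SaddleForm

section Plane

variable {E F : Type*} [NormedAddCommGroup E] [NormedSpace ℝ E] [NormedAddCommGroup F]
  [NormedSpace ℝ F] {p : Submodule ℝ E}

section VectorValued

variable {v : E → F}

lemma fderiv_apply_eq_zero_of_eq_zero_on_submodule {x e : E} (hd : DifferentiableAt ℝ v x)
    (h_van : ∀ y ∈ p, y ≠ 0 → v y = 0) (hxp : x ∈ p) (hx : x ≠ 0) (he : e ∈ p) :
    fderiv ℝ v x e = 0 := by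
  have hline : (fun t : ℝ => v (x + t • e)) =ᶠ[𝓝 0] fun _ => 0 := by
    have hcont : ContinuousAt (fun t : ℝ => x + t • e) 0 := by fun_prop
    filter_upwards [hcont.eventually_ne (by simpa using hx)] with t ht
    exact h_van _ (p.add_mem hxp (p.smul_mem t he)) ht
  rw [← hd.lineDeriv_eq_fderiv, lineDeriv, hline.deriv_eq, deriv_const]

lemma apply_add_eq_of_fderiv_apply_eq_zero {x q : E}
    (hd : ∀ t : ℝ, DifferentiableAt ℝ v (x + t • q))
    (h : ∀ t : ℝ, fderiv ℝ v (x + t • q) q = 0) : v (x + q) = v x := by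
  have hderiv (t : ℝ) : HasDerivAt (fun t : ℝ => v (x + t • q)) 0 t := by
    have hline : HasDerivAt (fun t : ℝ => x + t • q) q t := by
      simpa using ((hasDerivAt_id t).smul_const q).const_add x
    exact h t ▸ (hd t).hasFDerivAt.comp_hasDerivAt t hline
  simpa using is_const_of_deriv_eq_zero (fun t => (hderiv t).differentiableAt)
    (fun t => (hderiv t).deriv) 1 0

lemma add_ne_zero_of_notMem_of_mem {x y : E} (hx : x ∉ p) (hy : y ∈ p) : x + y ≠ 0 := fun h =>
  hx (eq_neg_of_add_eq_zero_left h ▸ p.neg_mem hy)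

lemma contDiff_fderiv_add_apply (hv : ∀ x ≠ 0, ContDiffAt ℝ 2 v x) {n : E} (hn : n ∉ p) (e : E) :
    ContDiff ℝ 1 fun z : p => fderiv ℝ v (n + z) e := by
  refine contDiff_iff_contDiffAt.2 fun z => ?_
  have hsub : ContDiffAt ℝ 1 (fun z : p => n + (z : E)) z :=
    contDiffAt_const.add p.subtypeL.contDiff.contDiffAt
  exact (((hv _ (add_ne_zero_of_notMem_of_mem hn z.2)).fderiv_right
    (m := 1) (by norm_num)).comp z hsub).clm_apply contDiffAt_const

lemma fderiv_fderiv_add_apply {n e : E} {z : p}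
    (hd : DifferentiableAt ℝ (fderiv ℝ v) (n + z)) (y : p) :
    fderiv ℝ (fun z : p => fderiv ℝ v (n + z) e) z y = fderiv ℝ (fderiv ℝ v) (n + z) y e := by
  have hsub : HasFDerivAt (fun z : p => n + (z : E)) p.subtypeL z :=
    p.subtypeL.hasFDerivAt.const_add n
  have hcomp : HasFDerivAt (fun z : p => fderiv ℝ v (n + z)) _ z := hd.hasFDerivAt.comp z hsub
  simp [(hcomp.clm_apply (hasFDerivAt_const e z)).fderiv]

lemma tendsto_fderiv_add_apply [FiniteDimensional ℝ p] (hv : ∀ x ≠ 0, ContDiffAt ℝ 2 v x)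
    (h_hom : PosHomogeneous 1 v) (h_van : ∀ x ∈ p, x ≠ 0 → v x = 0) (n : E) {e : E} (he : e ∈ p) :
    Tendsto (fun z : p => fderiv ℝ v (n + z) e) (cocompact p) (𝓝 0) := by
  have h_hom' : PosHomogeneous 0 fun x => fderiv ℝ v x e := fun t ht x hx => by
    simpa using DFunLike.congr_fun (h_hom.fderiv t ht x hx) e
  refine h_hom'.tendsto_cocompact_zero (fun x hx => ?_) (fun x hxp hx => ?_) n
  · exact (((hv x hx).fderiv_right (m := 1) (by norm_num)).continuousAt.clm_apply
      continuousAt_const).continuousWithinAt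
  · exact fderiv_apply_eq_zero_of_eq_zero_on_submodule ((hv x hx).differentiableAt two_ne_zero)
      h_van hxp hx he

end VectorValued

lemma span_eq_top_of_linearIndependent_of_notMem (hE : finrank ℝ E = 3) {e w : p}
    (hew : LinearIndependent ℝ ![e, w]) {x : E} (hx : x ∉ p) :
    Submodule.span ℝ {x, (e : E), (w : E)} = ⊤ := by
  have hew' : LinearIndependent ℝ ![(e : E), (w : E)] := by
    simpa [LinearIndependent.pair_iff, Subtype.ext_iff] using hew
  have hx' : x ∉ Submodule.span ℝ (range ![(e : E), (w : E)]) := fun h =>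
    hx (Submodule.span_le.2 (by simp [insert_subset_iff]) h)
  simpa only [Fin.range_cons, Matrix.range_cons_cons_empty] using
    (linearIndependent_finCons.2 ⟨hew', hx'⟩).span_eq_top_of_card_eq_finrank (by simp [hE])

variable {v : E → ℝ}

lemma fderiv_fderiv_eq_zero_of_det_nonneg (hE : finrank ℝ E = 3) {x : E}
    (hv : ContDiffAt ℝ 2 v x) (h_hom : PosHomogeneous 1 v)
    (h_saddle : IsSaddleForm (fderiv ℝ (fderiv ℝ v) x).toBilinForm) {e w : p}
    (hew : LinearIndependent ℝ ![e, w]) (hx : x ∉ p)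
    (hdet : 0 ≤ fderiv ℝ (fderiv ℝ v) x e e * fderiv ℝ (fderiv ℝ v) x w w
      - fderiv ℝ (fderiv ℝ v) x w e * fderiv ℝ (fderiv ℝ v) x e w) :
    fderiv ℝ (fderiv ℝ v) x = 0 := by
  have hsymm : IsSymmSndFDerivAt ℝ v x := hv.isSymmSndFDerivAt (by simp)
  have hker : fderiv ℝ (fderiv ℝ v) x x = 0 := by
    rw [h_hom.fderiv.fderiv_apply_self (ne_of_mem_of_not_mem p.zero_mem hx).symm
      ((hv.fderiv_right (m := 1) (by norm_num)).differentiableAt one_ne_zero), sub_self, zero_smul]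
  have hB := h_saddle.eq_zero_of_det_nonneg ⟨fun y z => hsymm y z⟩
    (span_eq_top_of_linearIndependent_of_notMem hE hew hx)
    (LinearMap.ext fun y => DFunLike.congr_fun hker y) hdet
  ext y z
  exact LinearMap.congr_fun₂ hB y z

lemma fderiv_apply_nonpos_of_isSaddleForm (hE : finrank ℝ E = 3)
    (hv : ∀ x ≠ 0, ContDiffAt ℝ 2 v x) (h_hom : PosHomogeneous 1 v) (hp : finrank ℝ p = 2)
    (h_van : ∀ x ∈ p, x ≠ 0 → v x = 0)
    (h_saddle : ∀ x ∉ p, IsSaddleForm (fderiv ℝ (fderiv ℝ v) x).toBilinForm)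
    {e n : E} (he : e ∈ p) (hn : n ∉ p) : fderiv ℝ v n e ≤ 0 := by
  rcases eq_or_ne e 0 with rfl | he0
  · simp
  lift e to p using he
  have : FiniteDimensional ℝ p := .of_finrank_pos (by omega)
  have he0' : e ≠ 0 := by simpa using he0
  have : Nontrivial p := nontrivial_of_ne e 0 he0'
  obtain ⟨w, hew⟩ := exists_linearIndependent_pair_of_one_lt_finrank (R := ℝ) (by omega) he0'
  have hv' (z : p) : ContDiffAt ℝ 2 v (n + z) := hv _ (add_ne_zero_of_notMem_of_mem hn z.2)
  have hderiv (z : p) (y : E) (d : p) := fderiv_fderiv_add_apply (e := y) (z := z)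
    (((hv' z).fderiv_right (m := 1) (by norm_num)).differentiableAt one_ne_zero) d
  have hlim := tendsto_fderiv_add_apply hv h_hom h_van n e.2
  have hmax := nonpos_of_jacobian_nonneg_imp_fderiv_eq_zero (u := e) (w := w)
    (contDiff_fderiv_add_apply hv hn e) (contDiff_fderiv_add_apply hv hn w)
    (fun z hz => ?_) (fun ε hε => hlim.eventually_le_const hε) 0
  · simpa using hmax
  · have hnz : n + (z : E) ∉ p := fun h => hn ((p.add_mem_iff_left z.2).1 h)
    simp only [hderiv] at hz
    ext d
    simp [hderiv, fderiv_fderiv_eq_zero_of_det_nonneg hE (hv' z) h_hom (h_saddle _ hnz) hew hnz hz]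

end Plane

theorem homogeneous_vanishing_on_plane_is_linear_general {E : Type*} [NormedAddCommGroup E]
    [NormedSpace ℝ E] (hE : finrank ℝ E = 3) {v : E → ℝ} (hv : ∀ x ≠ 0, ContDiffAt ℝ 2 v x)
    (h_hom : PosHomogeneous 1 v) {p : Submodule ℝ E} (hp : finrank ℝ p = 2)
    (h_van : ∀ x ∈ p, x ≠ 0 → v x = 0)
    (h_saddle : ∀ x ∉ p, IsSaddleForm (fderiv ℝ (fderiv ℝ v) x).toBilinForm) :
    (∀ e ∈ p, ∀ x ≠ 0, fderiv ℝ v x e = 0) ∧ ∃ ℓ : E →ₗ[ℝ] ℝ, ∀ x ≠ 0, v x = ℓ x := by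
  have hd (x : E) (hx : x ≠ 0) : DifferentiableAt ℝ v x := (hv x hx).differentiableAt two_ne_zero
  have h_nonpos {e n : E} (he : e ∈ p) (hn : n ∉ p) : fderiv ℝ v n e ≤ 0 :=
    fderiv_apply_nonpos_of_isSaddleForm hE hv h_hom hp h_van h_saddle he hn
  have h_fderiv : ∀ e ∈ p, ∀ x ≠ 0, fderiv ℝ v x e = 0 := fun e he x hx => by
    by_cases hxp : x ∈ p
    · exact fderiv_apply_eq_zero_of_eq_zero_on_submodule (hd x hx) h_van hxp hx he
    · exact (h_nonpos he hxp).antisymm (by simpa using h_nonpos (p.neg_mem he) hxp)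
  obtain ⟨q, hqp, hq⟩ := p.exists_mem_ne_zero_of_ne_bot (by rintro rfl; simp at hp)
  refine ⟨h_fderiv, fderiv ℝ v q, fun x hx => ?_⟩
  by_cases hxp : x ∈ p
  · exact (h_van x hxp hx).trans (h_fderiv x hxp q hq).symm
  · refine (h_hom.fderiv_apply_eq_of_add_smul_eq hx (hd q hq) (h_van q hqp hq) fun t ht => ?_).symm
    have hne (s : ℝ) : t • x + s • q ≠ 0 := add_ne_zero_of_notMem_of_mem
      (mt (p.smul_mem_iff ht.ne').1 hxp) (p.smul_mem s hqp)
    rw [add_comm]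
    exact apply_add_eq_of_fderiv_apply_eq_zero (fun s => hd _ (hne s))
      fun s => h_fderiv q hqp _ (hne s)

/-- Let `v` be real analytic and positively 1-homogeneous on `ℝ³ ∖ {0}`, vanishing on a
2-dimensional linear subspace `p`, and solving a linear uniformly elliptic equation
`Σ aᵢⱼ(x) ∂²v/∂xᵢ∂xⱼ = 0` on `ℝ³ ∖ p` with continuous coefficients. Then every
directional derivative `∂ₑv` with `e ∈ p` vanishes identically, and consequently `v`
is a linear function. -/
theorem homogeneous_vanishing_on_plane_is_linear
    (v : EuclideanSpace ℝ (Fin 3) → ℝ)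
    (h_an : AnalyticOnNhd ℝ v {x | x ≠ 0})
    (h_hom : ∀ t : ℝ, 0 < t → ∀ x : EuclideanSpace ℝ (Fin 3), x ≠ 0 →
      v (t • x) = t * v x)
    (p : Submodule ℝ (EuclideanSpace ℝ (Fin 3))) (hp : Module.finrank ℝ p = 2)
    (h_van : ∀ x ∈ p, x ≠ 0 → v x = 0)
    (a : Fin 3 → Fin 3 → EuclideanSpace ℝ (Fin 3) → ℝ)
    (h_cont : ∀ i j, ContinuousOn (a i j) {x | x ∉ p})
    (C : ℝ) (hC : 1 ≤ C)
    (h_ell : ∀ x : EuclideanSpace ℝ (Fin 3), x ∉ p →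
      ∀ ξ : EuclideanSpace ℝ (Fin 3),
        (1 / C) * ‖ξ‖ ^ 2 ≤ ∑ i, ∑ j, a i j x * ξ i * ξ j ∧
        ∑ i, ∑ j, a i j x * ξ i * ξ j ≤ C * ‖ξ‖ ^ 2)
    (h_eq : ∀ x : EuclideanSpace ℝ (Fin 3), x ∉ p →
      ∑ i, ∑ j, a i j x *
        iteratedFDeriv ℝ 2 v x ![EuclideanSpace.single i 1, EuclideanSpace.single j 1] = 0) :
    (∀ e ∈ p, ∀ x : EuclideanSpace ℝ (Fin 3), x ≠ 0 → fderiv ℝ v x e = 0) ∧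
    ∃ ℓ : EuclideanSpace ℝ (Fin 3) →ₗ[ℝ] ℝ,
      ∀ x : EuclideanSpace ℝ (Fin 3), x ≠ 0 → v x = ℓ x := by
  exact homogeneous_vanishing_on_plane_is_linear_general finrank_euclideanSpace_fin
    (fun x hx => (h_an x hx).contDiffAt) (by simpa [PosHomogeneous] using h_hom) hp h_van
    fun x hx => isSaddleForm_fderiv_fderiv_of_sum_mul_eq_zero
      (one_div_pos.2 (zero_lt_one.trans_le hC)) (fun ξ => (h_ell x hx ξ).1) (h_eq x hx)
end
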